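/- arXiv:2211.10313 — 2 statements merged into one kernel-verified Lean document; each statement's English description precedes it below -/
import Mathlib

section
/- Let R = A(n,q1,q2) with n ≥ 1. Then R is σ-elementary if and only if σ(R) < σ(S), where S ≅ R/J(R) is the direct product ring M_n(F_{q1}) × F_{q2}. -/
/-!
Let `R = AGL n F1 F2` and let `J` be the ideal of matrices supported on the top-right column. The
covering number can only grow along a surjection `R → S`, since a cover of `S` pulls back to one of
`R` (`coveringNumber_le_of_surjective`). So it suffices that `J` is the least nonzero ideal
(`AGL.mk_zero_mem`): then `R / J` maps onto `R / I` for every nonzero `I`, and `R / J` is the ring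
`M_n(F1) × F2`, which sits inside `R` as the block-diagonal matrices (`AGL.diag`).

A nonzero ideal meets `J` nontrivially: a matrix outside `J` has a nonzero block in `M_n(F1)` or
in `F2`, so it does not kill `J` under multiplication on one of the two sides. A nonzero column in the ideal yields, by multiplying with
elementary matrices, a nonzero scalar `x` such that all columns `x • e_i` lie in the ideal. The
scalars `t` that stabilise the set of such `x` form a subring of the finite field `F` (hence a
subfield) containing `F1` and `F2`, and therefore all of `F = F1 ⊔ F2`; so the ideal contains `J`.
-/

open scoped Classical

noncomputable section

/-- A (finite) cover of a not-necessarily-unital ring: a finite collection of proper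
subrings whose set-theoretic union is all of `R`. -/
def IsRingCover (R : Type*) [NonUnitalRing R] (C : Finset (NonUnitalSubring R)) : Prop :=
  (∀ S ∈ C, S ≠ (⊤ : NonUnitalSubring R)) ∧ ∀ r : R, ∃ S ∈ C, r ∈ S

/-- The covering number `σ(R)`: the least cardinality of a cover of `R`,
or `⊤` if no cover exists. -/
noncomputable def coveringNumber (R : Type*) [NonUnitalRing R] : ℕ∞ :=
  sInf {c : ℕ∞ | ∃ C : Finset (NonUnitalSubring R), IsRingCover R C ∧ (C.card : ℕ∞) = c}

/-- `R` is σ-elementary if `σ(R) < σ(R/I)` for every nonzero two-sided ideal `I`. -/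
def IsSigmaElementary (R : Type*) [NonUnitalRing R] : Prop :=
  ∀ I : TwoSidedIdeal R, I ≠ ⊥ → coveringNumber R < coveringNumber I.ringCon.Quotient

/-- The AGL-type ring `A(n, F1, F2)` as a subring of `(n+1) × (n+1)` matrices over `F`:
top-left `n × n` block with entries in `F1`, arbitrary top-right column, zero bottom-left
row, bottom-right entry in `F2`. -/
def AGL (n : ℕ) {F : Type*} [Field F] (F1 F2 : Subfield F) :
    Subring (Matrix (Fin (n + 1)) (Fin (n + 1)) F) where
  carrier := {M | (∀ i j : Fin n, M i.castSucc j.castSucc ∈ F1) ∧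
      (∀ j : Fin n, M (Fin.last n) j.castSucc = 0) ∧
      M (Fin.last n) (Fin.last n) ∈ F2}
  zero_mem' := by
    refine ⟨fun i j => ?_, fun j => rfl, ?_⟩
    · exact zero_mem F1
    · exact zero_mem F2
  one_mem' := by
    refine ⟨fun i j => ?_, fun j => ?_, ?_⟩
    · rw [Matrix.one_apply]
      split
      · exact one_mem F1
      · exact zero_mem F1
    · exact Matrix.one_apply_ne (Fin.castSucc_lt_last j).ne'
    · rw [Matrix.one_apply_eq]; exact one_mem F2
  add_mem' := by
    rintro a b ⟨ha1, ha2, ha3⟩ ⟨hb1, hb2, hb3⟩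
    refine ⟨fun i j => add_mem (ha1 i j) (hb1 i j), fun j => ?_, add_mem ha3 hb3⟩
    rw [Matrix.add_apply, ha2 j, hb2 j, add_zero]
  neg_mem' := by
    rintro a ⟨ha1, ha2, ha3⟩
    refine ⟨fun i j => neg_mem (ha1 i j), fun j => ?_, neg_mem ha3⟩
    rw [Matrix.neg_apply, ha2 j, neg_zero]
  mul_mem' := by
    rintro a b ⟨ha1, ha2, ha3⟩ ⟨hb1, hb2, hb3⟩
    refine ⟨fun i j => ?_, fun j => ?_, ?_⟩
    · rw [Matrix.mul_apply, Fin.sum_univ_castSucc, hb2 j, mul_zero, add_zero]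
      exact sum_mem fun k _ => mul_mem (ha1 i k) (hb1 k j)
    · rw [Matrix.mul_apply, Fin.sum_univ_castSucc, hb2 j, mul_zero, add_zero]
      exact Finset.sum_eq_zero fun k _ => by rw [ha2 k, zero_mul]
    · rw [Matrix.mul_apply, Fin.sum_univ_castSucc]
      have h0 : ∑ k : Fin n, a (Fin.last n) k.castSucc * b k.castSucc (Fin.last n) = 0 :=
        Finset.sum_eq_zero fun k _ => by rw [ha2 k, zero_mul]
      rw [h0, zero_add]
      exact mul_mem ha3 hb3

/-- The Gaussian (q-)binomial coefficient, via the Pascal-type recurrence. -/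
def gaussBinom (q : ℕ) : ℕ → ℕ → ℕ
  | _, 0 => 1
  | 0, _ + 1 => 0
  | n + 1, k + 1 => gaussBinom q n k + q ^ (k + 1) * gaussBinom q n (k + 1)

/-- The order of `GL(N, Q)` for a prime power `Q`. -/
def GLcard (N Q : ℕ) : ℕ := ∏ k ∈ Finset.range N, (Q ^ N - Q ^ k)

theorem coveringNumber_le_of_surjective {R S : Type*} [NonUnitalRing R] [NonUnitalRing S]
    (f : R →ₙ+* S) (hf : Function.Surjective f) : coveringNumber R ≤ coveringNumber S := by
  refine le_sInf ?_
  rintro c ⟨C, ⟨hproper, hcov⟩, rfl⟩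
  have hcard : ((C.image (NonUnitalSubring.comap f)).card : ℕ∞) ≤ C.card := by
    exact_mod_cast Finset.card_image_le
  refine le_trans (sInf_le ⟨C.image (NonUnitalSubring.comap f), ⟨?_, ?_⟩, rfl⟩) hcard
  · intro T hT
    obtain ⟨U, hU, rfl⟩ := Finset.mem_image.1 hT
    intro htop
    refine hproper U hU (eq_top_iff.2 fun s _ => ?_)
    obtain ⟨r, rfl⟩ := hf s
    have : r ∈ NonUnitalSubring.comap f U := htop ▸ NonUnitalSubring.mem_top r
    exact this
  · intro r
    obtain ⟨U, hU, hr⟩ := hcov (f r)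
    exact ⟨_, Finset.mem_image_of_mem _ hU, hr⟩

namespace AGL

variable {n : ℕ} {F : Type} [Field F] {F1 F2 : Subfield F}

/-- The element of `AGL n F1 F2` with top-left block `A`, top-right column `v` and bottom-right
entry `d`. -/
def mk (A : Matrix (Fin n) (Fin n) F1) (v : Fin n → F) (d : F2) : AGL n F1 F2 :=
  ⟨Matrix.of fun i j => Fin.lastCases (motive := fun _ => F)
      (Fin.lastCases (motive := fun _ => F) (d : F) v i)
      (fun j' => Fin.lastCases (motive := fun _ => F) 0 (fun i' => (A i' j' : F)) i) j, by
    refine ⟨fun i j => ?_, fun j => ?_, ?_⟩ <;> simp⟩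

theorem exists_mk (M : AGL n F1 F2) : ∃ A v d, M = mk A v d := by
  obtain ⟨M, h1, h2, h3⟩ := M
  refine ⟨fun i j => ⟨_, h1 i j⟩, fun i => M i.castSucc (Fin.last n), ⟨_, h3⟩, ?_⟩
  ext i j
  refine Fin.lastCases ?_ (fun j => ?_) j <;> refine Fin.lastCases ?_ (fun i => ?_) i <;>
    simp [mk, h2]

theorem mk_mul (A B : Matrix (Fin n) (Fin n) F1) (v w : Fin n → F) (d e : F2) :
    mk A v d * mk B w e =
      mk (A * B) (fun i => ∑ k, (A i k : F) * w k + v i * e) (d * e) := by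
  ext i j
  refine Fin.lastCases ?_ (fun j => ?_) j <;> refine Fin.lastCases ?_ (fun i => ?_) i <;>
    simp [mk, Matrix.mul_apply, Fin.sum_univ_castSucc]

theorem mk_add (A B : Matrix (Fin n) (Fin n) F1) (v w : Fin n → F) (d e : F2) :
    mk A v d + mk B w e = mk (A + B) (v + w) (d + e) := by
  ext i j
  refine Fin.lastCases ?_ (fun j => ?_) j <;> refine Fin.lastCases ?_ (fun i => ?_) i <;>
    simp [mk]

theorem mk_neg (A : Matrix (Fin n) (Fin n) F1) (v : Fin n → F) (d : F2) :
    -mk A v d = mk (-A) (-v) (-d) := by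
  ext i j
  refine Fin.lastCases ?_ (fun j => ?_) j <;> refine Fin.lastCases ?_ (fun i => ?_) i <;>
    simp [mk]

theorem mk_zero : mk (0 : Matrix (Fin n) (Fin n) F1) 0 (0 : F2) = 0 := by
  ext i j
  refine Fin.lastCases ?_ (fun j => ?_) j <;> refine Fin.lastCases ?_ (fun i => ?_) i <;>
    simp [mk]

theorem mk_inj {A B : Matrix (Fin n) (Fin n) F1} {v w : Fin n → F} {d e : F2}
    (h : mk A v d = mk B w e) : A = B ∧ v = w ∧ d = e := by
  have h' := fun i j => congrFun (congrFun (congrArg Subtype.val h) i) j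
  refine ⟨?_, ?_, ?_⟩
  · ext i j
    simpa [mk] using h' i.castSucc j.castSucc
  · ext i
    simpa [mk] using h' i.castSucc (Fin.last n)
  · ext
    simpa [mk] using h' (Fin.last n) (Fin.last n)

/-- The block-diagonal embedding, a section of `AGL n F1 F2 → M_n(F1) × F2`. -/
def diag : Matrix (Fin n) (Fin n) F1 × F2 →ₙ+* AGL n F1 F2 where
  toFun x := mk x.1 0 x.2
  map_mul' x y := by rw [mk_mul]; congr 1; ext; simp
  map_zero' := mk_zero
  map_add' x y := by rw [mk_add]; simp

/-- The ideal of matrices supported on the top-right column (the Jacobson radical). -/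
def radical (n : ℕ) (F1 F2 : Subfield F) : TwoSidedIdeal (AGL n F1 F2) :=
  TwoSidedIdeal.mk' {M | ∃ v, M = mk 0 v 0} ⟨0, mk_zero.symm⟩
    (by rintro _ _ ⟨v, rfl⟩ ⟨w, rfl⟩; exact ⟨v + w, by rw [mk_add]; simp⟩)
    (by rintro _ ⟨v, rfl⟩; exact ⟨-v, by rw [mk_neg]; simp⟩)
    (by
      rintro x _ ⟨v, rfl⟩
      obtain ⟨A, w, d, rfl⟩ := exists_mk x
      exact ⟨_, by rw [mk_mul, mul_zero, mul_zero]⟩)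
    (by
      rintro _ y ⟨v, rfl⟩
      obtain ⟨A, w, d, rfl⟩ := exists_mk y
      exact ⟨_, by rw [mk_mul, zero_mul, zero_mul]⟩)

theorem mem_radical {M : AGL n F1 F2} : M ∈ radical n F1 F2 ↔ ∃ v, M = mk 0 v 0 :=
  TwoSidedIdeal.mem_mk' ..

theorem exists_column_mem (hn : 1 ≤ n) (I : TwoSidedIdeal (AGL n F1 F2)) (hI : I ≠ ⊥) :
    ∃ v : Fin n → F, v ≠ 0 ∧ mk 0 v 0 ∈ I := by
  obtain ⟨M, hM, hM0⟩ : ∃ M ∈ I, M ≠ 0 := by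
    by_contra! h
    exact hI (eq_bot_iff.2 fun x hx => (TwoSidedIdeal.mem_bot _).2 (h x hx))
  obtain ⟨A, v, d, rfl⟩ := exists_mk M
  by_cases hA : A = 0
  · by_cases hd : d = 0
    · subst hA hd
      refine ⟨v, ?_, hM⟩
      rintro rfl
      exact hM0 mk_zero
    · refine ⟨fun _ => d, fun h => hd ?_, ?_⟩
      · exact Subtype.ext (congrFun h ⟨0, hn⟩)
      · have := I.mul_mem_left (mk 0 (fun _ => 1) 0) _ hM
        rw [mk_mul] at this
        simpa using this
  · obtain ⟨i, k, hik⟩ : ∃ i k, A i k ≠ 0 := by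
      by_contra! h
      exact hA (Matrix.ext h)
    refine ⟨fun i => A i k, fun h => hik (Subtype.ext (congrFun h i)), ?_⟩
    have := I.mul_mem_right _ (mk 0 (Pi.single k 1) 0) hM
    rw [mk_mul] at this
    simpa [Pi.single_apply] using this

/-- Every nonzero ideal contains the radical. -/
theorem mk_zero_mem [Fintype F] (hn : 1 ≤ n) (hcomp : F1 ⊔ F2 = ⊤)
    (I : TwoSidedIdeal (AGL n F1 F2)) (hI : I ≠ ⊥) (w : Fin n → F) : mk 0 w 0 ∈ I := by
  obtain ⟨v, hv, hvI⟩ := exists_column_mem hn I hI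
  obtain ⟨k, hk⟩ := Function.ne_iff.1 hv
  let K : Set F := {x | ∀ i, mk 0 (Pi.single i x) 0 ∈ I}
  have hK : ∀ x, x ∈ K ↔ ∀ i, mk 0 (Pi.single i x) 0 ∈ I := fun _ => Iff.rfl
  have hvK : v k ∈ K := fun i => by
    have := I.mul_mem_left (mk (Matrix.single i k 1) 0 0) _ hvI
    rw [mk_mul] at this
    convert this using 2
    · simp
    · ext j
      by_cases hj : j = i
      · subst hj
        simp [Matrix.single_apply, apply_ite Subtype.val]
      · simp [hj, Ne.symm hj]
    · simp
  have hadd : ∀ x ∈ K, ∀ y ∈ K, x + y ∈ K := fun x hx y hy i => by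
    have := I.add_mem (hx i) (hy i)
    rw [mk_add] at this
    simpa [Pi.single_add] using this
  have hneg : ∀ x ∈ K, -x ∈ K := fun x hx i => by
    have := I.neg_mem (hx i)
    rw [mk_neg] at this
    simpa [Pi.single_neg] using this
  have hzero : (0 : F) ∈ K := fun i => by
    simp [mk_zero]
  -- The multiplier ring of `K`; in a finite field inverses are powers.
  let T : Subfield F :=
    { carrier := {t | ∀ x ∈ K, t * x ∈ K}
      mul_mem' := fun {a b} ha hb x hx => by rw [mul_assoc]; exact ha _ (hb _ hx)
      one_mem' := fun x hx => by rwa [one_mul]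
      add_mem' := fun {a b} ha hb x hx => by
        rw [add_mul]; exact hadd _ (ha _ hx) _ (hb _ hx)
      zero_mem' := fun x hx => by rwa [zero_mul]
      neg_mem' := fun {a} ha x hx => by rw [neg_mul]; exact hneg _ (ha _ hx)
      inv_mem' := fun a ha x hx => by
        by_cases h0 : a = 0
        · rwa [h0, inv_zero, zero_mul]
        have hpow : ∀ m : ℕ, a ^ m * x ∈ K := by
          intro m
          induction m with
          | zero => rwa [pow_zero, one_mul]
          | succ m ih => rw [pow_succ', mul_assoc]; exact ha _ ih
        have hinv : a⁻¹ = a ^ (Fintype.card F - 2) := by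
          have h1 := FiniteField.pow_card_sub_one_eq_one a h0
          have h2 : Fintype.card F - 1 = Fintype.card F - 2 + 1 := by
            have := Fintype.one_lt_card (α := F)
            omega
          rw [h2, pow_succ] at h1
          exact (eq_inv_of_mul_eq_one_left h1).symm
        rw [hinv]
        exact hpow _ }
  have hT1 : F1 ≤ T := fun t ht x hx i => by
    have := I.mul_mem_left (mk (Matrix.scalar (Fin n) ⟨t, ht⟩) 0 0) _ (hx i)
    rw [mk_mul] at this
    convert this using 2
    · simp
    · ext j
      simp [Matrix.diagonal_apply, Pi.single_apply, apply_ite Subtype.val]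
    · simp
  have hT2 : F2 ≤ T := fun t ht x hx i => by
    have := I.mul_mem_right _ (mk 0 0 ⟨t, ht⟩) (hx i)
    rw [mk_mul] at this
    convert this using 2
    · simp
    · ext j
      simp [Pi.single_apply, mul_comm]
    · simp
  have hT : ∀ t : F, t ∈ T := fun t => by
    have : (⊤ : Subfield F) ≤ T := hcomp ▸ sup_le hT1 hT2
    exact this trivial
  have hall : ∀ x : F, x ∈ K := fun x => by
    have := hT (x * (v k)⁻¹) _ hvK
    rwa [inv_mul_cancel_right₀ hk] at this
  have hsum : ∀ s : Finset (Fin n), mk 0 (∑ i ∈ s, Pi.single i (w i)) 0 ∈ I := by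
    intro s
    induction s using Finset.induction_on with
    | empty => simp [mk_zero]
    | insert i s hi ih =>
      have := I.add_mem (hall (w i) i) ih
      rw [mk_add] at this
      simpa [Finset.sum_insert hi] using this
  have := hsum Finset.univ
  rwa [Finset.univ_sum_single] at this

/-- If an ideal contains the radical, the block-diagonal matrices surject onto its quotient. -/
theorem surjective_diag (I : TwoSidedIdeal (AGL n F1 F2)) (hI : ∀ w, mk 0 w 0 ∈ I) :
    Function.Surjective ((I.ringCon.mk' : AGL n F1 F2 →ₙ+* I.ringCon.Quotient).comp
      (diag (n := n) (F1 := F1) (F2 := F2))) := by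
  intro y
  obtain ⟨M, rfl⟩ := I.ringCon.mk'_surjective y
  obtain ⟨A, v, d, rfl⟩ := exists_mk M
  refine ⟨(A, d), (RingCon.eq _).2 ?_⟩
  rw [TwoSidedIdeal.rel_iff]
  convert hI (-v) using 1
  change mk A 0 d - mk A v d = _
  rw [sub_eq_add_neg, mk_neg, mk_add]
  simp

theorem injective_diag_radical :
    Function.Injective (((radical n F1 F2).ringCon.mk' :
      AGL n F1 F2 →ₙ+* (radical n F1 F2).ringCon.Quotient).comp
      (diag (n := n) (F1 := F1) (F2 := F2))) := by
  rintro ⟨A, d⟩ ⟨B, e⟩ h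
  have h' := (RingCon.eq _).1 h
  rw [TwoSidedIdeal.rel_iff, mem_radical] at h'
  obtain ⟨v, hv⟩ := h'
  change mk A 0 d - mk B 0 e = _ at hv
  rw [sub_eq_add_neg, mk_neg, mk_add] at hv
  obtain ⟨h1, -, h3⟩ := mk_inj hv
  rw [← sub_eq_add_neg, sub_eq_zero] at h1 h3
  rw [h1, h3]

end AGL

/-- Lemma 3.2: `A(n,q1,q2)` is σ-elementary iff `σ(R) < σ(S)` where
`S ≅ R/J(R) ≅ M_n(F_{q1}) × F_{q2}`. -/
theorem AGL_sigmaElementary_iff_lt_semisimple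
    (p d1 d2 n : ℕ) (hp : p.Prime) (hd1 : 1 ≤ d1) (hd2 : 1 ≤ d2) (hn : 1 ≤ n)
    (F : Type) [Field F] [Fintype F] (F1 F2 : Subfield F)
    (hF1 : Nat.card F1 = p ^ d1) (hF2 : Nat.card F2 = p ^ d2)
    (hF : Nat.card F = p ^ Nat.lcm d1 d2) (hcomp : F1 ⊔ F2 = ⊤) :
    IsSigmaElementary ↥(AGL n F1 F2) ↔
      coveringNumber ↥(AGL n F1 F2) <
        coveringNumber (Matrix (Fin n) (Fin n) ↥F1 × ↥F2) := by
  constructor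
  · intro h
    refine (h (AGL.radical n F1 F2) ?_).trans_le ?_
    · intro hbot
      have hmem : AGL.mk 0 (fun _ => 1) 0 ∈ AGL.radical n F1 F2 := AGL.mem_radical.2 ⟨_, rfl⟩
      rw [hbot, TwoSidedIdeal.mem_bot, ← AGL.mk_zero] at hmem
      exact one_ne_zero (congrFun (AGL.mk_inj hmem).2.1 ⟨0, hn⟩)
    · let e := RingEquiv.ofBijective _ ⟨AGL.injective_diag_radical (n := n) (F1 := F1) (F2 := F2),
        AGL.surjective_diag _ fun w => AGL.mem_radical.2 ⟨w, rfl⟩⟩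
      exact coveringNumber_le_of_surjective (e.symm : _ →ₙ+* _) e.symm.surjective
  · intro h I hI
    exact h.trans_le (coveringNumber_le_of_surjective _
      (AGL.surjective_diag I (AGL.mk_zero_mem hn hcomp I hI)))
end
end

section
/- Let R = A(n,q1,q2) with n ≥ 1 and q = q1 ⊗ q2. If R is σ-elementary, then q^n + 1 ≤ σ(R) ≤ (q^{n+1} − 1)/(q − 1). -/
/-!
Write `R = A(n, F1, F2)` and `J` for the ideal of matrices concentrated in the top-right column,
so that `J ≅ F ^ n` and `J * J = 0`.

*Lower bound.* Since `F1` and `F2` generate `F`, the ideal `J` is a minimal two-sided ideal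
(`isAtom_colIdeal`). Take a cover of `R` of size `σ(R) < σ(R / J)`. The members whose image in
`R / J` is proper cannot have images covering `R / J`, so some coset `r + J` is met only by members
`T` with `T + J = R`. For these, `T ∩ J` is a two-sided ideal because `J * J = 0`, hence it is zero
by minimality, and `T` contains at most one element of `r + J`. So there are at least `|J| = q ^ n`
such members; none of them contains a nonzero element of `J`, which requires one more member.
This is `card_add_one_le_coveringNumber`.

*Upper bound.* For a nonzero `y : F ^ (n + 1)`, the matrices `r ∈ R` with `r y = r_{nn} y`, where
`r_{nn}` is the bottom-right entry, form a proper subring depending only on the line spanned by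
`y`. Every `r ∈ R` lies in one of them, as the last row of `r - r_{nn}` vanishes and so this matrix
is singular. Hence `σ(R)` is at most the number of points of the projective space of `F ^ (n + 1)`.
-/

open scoped Classical

noncomputable section

/-! ### A lower bound from a minimal ideal of square zero -/

lemma coveringNumber_le_card {R : Type*} [NonUnitalRing R] {C : Finset (NonUnitalSubring R)}
    (hC : IsRingCover R C) : coveringNumber R ≤ (C.card : ℕ∞) :=
  sInf_le ⟨C, hC, rfl⟩

/-- If `T` surjects onto `R / J` for a minimal two-sided ideal `J` of square zero, and `T ≠ ⊤`, then
`T` is a complement of `J`. -/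
lemma eq_zero_of_mem_of_surjective_mod {R : Type*} [NonUnitalRing R] (J : TwoSidedIdeal R)
    (hJ : IsAtom J) (hsq : ∀ x ∈ J, ∀ y ∈ J, x * y = 0) (T : NonUnitalSubring R) (hT : T ≠ ⊤)
    (hsurj : ∀ r : R, ∃ t ∈ T, t - r ∈ J) {x : R} (hxT : x ∈ T) (hxJ : x ∈ J) : x = 0 := by
  let K : TwoSidedIdeal R := TwoSidedIdeal.mk' {x | x ∈ T ∧ x ∈ J}
    ⟨T.zero_mem, J.zero_mem⟩
    (fun hx hy => ⟨T.add_mem hx.1 hy.1, J.add_mem hx.2 hy.2⟩)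
    (fun hx => ⟨T.neg_mem hx.1, J.neg_mem hx.2⟩)
    (fun {r y} hy => by
      obtain ⟨t, ht, htr⟩ := hsurj r
      refine ⟨?_, J.mul_mem_left _ _ hy.2⟩
      have h := hsq _ htr _ hy.2
      rw [sub_mul, sub_eq_zero] at h
      rw [← h]
      exact T.mul_mem ht hy.1)
    (fun {y r} hy => by
      obtain ⟨t, ht, htr⟩ := hsurj r
      refine ⟨?_, J.mul_mem_right _ _ hy.2⟩
      have h := hsq _ hy.2 _ htr
      rw [mul_sub, sub_eq_zero] at h
      rw [← h]
      exact T.mul_mem hy.1 ht)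
  have hK : ∀ z, z ∈ K ↔ z ∈ T ∧ z ∈ J := fun z => by simp [K]
  have hKJ : K ≤ J := fun z hz => ((hK z).1 hz).2
  rcases hJ.le_iff.1 hKJ with h | h
  · have : x ∈ K := (hK x).2 ⟨hxT, hxJ⟩
    rw [h] at this
    simpa using this
  · exfalso
    refine hT (eq_top_iff.2 fun r _ => ?_)
    obtain ⟨t, ht, htr⟩ := hsurj r
    rw [← h] at htr
    have := T.sub_mem ht ((hK _).1 htr).1
    rwa [sub_sub_cancel] at this

lemma card_add_one_le_coveringNumber {R : Type*} [NonUnitalRing R] (J : TwoSidedIdeal R)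
    (hJ : IsAtom J) (hsq : ∀ x ∈ J, ∀ y ∈ J, x * y = 0)
    (hσ : coveringNumber R < coveringNumber J.ringCon.Quotient) :
    ((Nat.card J + 1 : ℕ) : ℕ∞) ≤ coveringNumber R := by
  have hne : {c : ℕ∞ | ∃ C : Finset (NonUnitalSubring R),
      IsRingCover R C ∧ (C.card : ℕ∞) = c}.Nonempty := by
    by_contra h
    rw [Set.not_nonempty_iff_eq_empty] at h
    rw [coveringNumber, h, sInf_empty] at hσ
    exact not_top_lt hσ
  obtain ⟨C, ⟨hproper, hcov⟩, hCcard⟩ := csInf_mem hne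
  change (C.card : ℕ∞) = coveringNumber R at hCcard
  let π : R →ₙ+* J.ringCon.Quotient :=
    { toFun := fun r => (r : J.ringCon.Quotient)
      map_mul' := fun _ _ => rfl
      map_zero' := rfl
      map_add' := fun _ _ => rfl }
  have hπ : ∀ a b : R, π a = π b ↔ a - b ∈ J := fun a b =>
    (RingCon.eq _).trans (TwoSidedIdeal.rel_iff J a b)
  have hπs : Function.Surjective π := Quotient.mk''_surjective
  -- a coset avoiding all members of the cover with proper image in the quotient
  obtain ⟨r, hr⟩ : ∃ r : R, ∀ T ∈ C, π r ∈ T.map π → T.map π = ⊤ := by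
    by_contra! h
    have hcov' : IsRingCover J.ringCon.Quotient
        ((C.filter fun T => T.map π ≠ ⊤).image fun T => T.map π) := by
      refine ⟨fun S hS => ?_, fun q => ?_⟩
      · obtain ⟨T, hT, rfl⟩ := Finset.mem_image.1 hS
        exact (Finset.mem_filter.1 hT).2
      · obtain ⟨r, rfl⟩ := hπs q
        obtain ⟨T, hT, hrT, hne'⟩ := h r
        exact ⟨_, Finset.mem_image_of_mem _ (Finset.mem_filter.2 ⟨hT, hne'⟩), hrT⟩
    have h1 : coveringNumber J.ringCon.Quotient ≤ (C.card : ℕ∞) := by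
      refine (coveringNumber_le_card hcov').trans ?_
      exact_mod_cast Finset.card_image_le.trans (Finset.card_filter_le _ _)
    rw [hCcard] at h1
    exact absurd hσ (not_lt.2 h1)
  have hzero : ∀ T ∈ C, T.map π = ⊤ → ∀ x ∈ T, x ∈ J → x = 0 := by
    intro T hT hmap x hxT hxJ
    refine eq_zero_of_mem_of_surjective_mod J hJ hsq T (hproper T hT) (fun s => ?_) hxT hxJ
    have hs : π s ∈ T.map π := hmap ▸ NonUnitalSubring.mem_top _
    obtain ⟨t, ht, hts⟩ := NonUnitalSubring.mem_map.1 hs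
    exact ⟨t, ht, (hπ t s).1 hts⟩
  choose g hgC hg using hcov
  have hmem : ∀ j : J, g (r + j) ∈ C.filter fun T => T.map π = ⊤ := by
    intro j
    refine Finset.mem_filter.2 ⟨hgC _, hr _ (hgC _) ?_⟩
    refine NonUnitalSubring.mem_map.2 ⟨r + j, hg _, (hπ _ _).2 ?_⟩
    simp
  have hinj : Function.Injective
      fun j : J => (⟨g (r + j), hmem j⟩ : {T // T ∈ C.filter fun T => T.map π = ⊤}) := by
    intro j k hjk
    have hjk' : g (r + j) = g (r + k) := congrArg Subtype.val hjk
    have h1 := hg (r + j)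
    have h2 := hg (r + k)
    rw [← hjk'] at h2
    have h3 := hzero _ (hgC _) (Finset.mem_filter.1 (hmem j)).2 _ (sub_mem h1 h2)
      (by rw [add_sub_add_left_eq_sub]; exact J.sub_mem j.2 k.2)
    rw [add_sub_add_left_eq_sub, sub_eq_zero] at h3
    exact Subtype.ext h3
  have hle := Nat.card_le_card_of_injective _ hinj
  rw [Nat.card_eq_finsetCard] at hle
  obtain ⟨x, hxJ, hx0⟩ : ∃ x ∈ J, x ≠ 0 := by
    by_contra! h
    exact hJ.1 (le_bot_iff.1 fun x hx => by simp [h x hx])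
  -- complements of `J` miss `x`, so the member containing `x` is an additional one
  have hlt : (C.filter fun T => T.map π = ⊤).card < C.card := by
    refine Finset.card_lt_card (Finset.filter_ssubset.2 ⟨g x, hgC x, fun h => ?_⟩)
    exact hx0 (hzero _ (hgC x) h x (hg x) hxJ)
  rw [← hCcard]
  exact_mod_cast Nat.succ_le_of_lt (hle.trans_lt hlt)

/-! ### The column ideal -/

section Column

open scoped Matrix

variable {n : ℕ} {F : Type} [Field F] {F1 F2 : Subfield F}

/-- The element of `AGL n F1 F2` whose only nonzero entries form the top-right column `w`. -/
def colElt (F1 F2 : Subfield F) (w : Fin n → F) : AGL n F1 F2 :=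
  ⟨Matrix.of fun i j => if j = Fin.last n then Fin.snoc (α := fun _ => F) w 0 i else 0, by
    refine ⟨fun i j => ?_, fun j => ?_, ?_⟩
    · simp [Fin.castSucc_ne_last]
    · simp
    · simp⟩

/-- The block diagonal element of `AGL n F1 F2` with blocks `A` and `b`. -/
def diagElt (A : Matrix (Fin n) (Fin n) F) (b : F) (hA : ∀ i j, A i j ∈ F1) (hb : b ∈ F2) :
    AGL n F1 F2 :=
  ⟨Matrix.of fun i j => Fin.snoc (α := fun _ => F)
      (fun i' => Fin.snoc (α := fun _ => F) (A i') 0 j)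
      (Fin.snoc (α := fun _ => F) (fun _ : Fin n => 0) b j) i, by
    refine ⟨fun i j => ?_, fun j => ?_, ?_⟩
    · simpa using hA i j
    · simp
    · simpa using hb⟩

@[simp] lemma colElt_castSucc (w : Fin n → F) (i : Fin (n + 1)) (j : Fin n) :
    (colElt F1 F2 w).1 i j.castSucc = 0 := by
  simp [colElt, Fin.castSucc_ne_last]

@[simp] lemma colElt_last_last (w : Fin n → F) :
    (colElt F1 F2 w).1 (Fin.last n) (Fin.last n) = 0 := by
  simp [colElt]

@[simp] lemma colElt_castSucc_last (w : Fin n → F) (i : Fin n) :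
    (colElt F1 F2 w).1 i.castSucc (Fin.last n) = w i := by
  simp [colElt]

lemma AGL_ext {x y : AGL n F1 F2} (h1 : ∀ i j : Fin n, x.1 i.castSucc j.castSucc =
    y.1 i.castSucc j.castSucc) (h2 : ∀ i : Fin n, x.1 i.castSucc (Fin.last n) =
    y.1 i.castSucc (Fin.last n)) (h3 : x.1 (Fin.last n) (Fin.last n) =
    y.1 (Fin.last n) (Fin.last n)) : x = y := by
  refine Subtype.ext (Matrix.ext fun i j => ?_)
  induction i using Fin.lastCases with
  | last =>
    induction j using Fin.lastCases with
    | last => exact h3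
    | cast j => rw [x.2.2.1 j, y.2.2.1 j]
  | cast i =>
    induction j using Fin.lastCases with
    | last => exact h2 i
    | cast j => exact h1 i j

lemma mul_colElt (x : AGL n F1 F2) (w : Fin n → F) :
    x * colElt F1 F2 w =
      colElt F1 F2 fun i => ∑ k : Fin n, x.1 i.castSucc k.castSucc * w k := by
  refine AGL_ext (fun i j => ?_) (fun i => ?_) ?_ <;>
    simp [Matrix.mul_apply, Fin.sum_univ_castSucc, x.2.2.1]

lemma colElt_mul (x : AGL n F1 F2) (w : Fin n → F) :
    colElt F1 F2 w * x = colElt F1 F2 fun i => x.1 (Fin.last n) (Fin.last n) * w i := by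
  refine AGL_ext (fun i j => ?_) (fun i => ?_) ?_ <;>
    simp [Matrix.mul_apply, Fin.sum_univ_castSucc, x.2.2.1, mul_comm]

lemma colElt_zero : colElt F1 F2 (0 : Fin n → F) = 0 := by
  refine AGL_ext (fun i j => ?_) (fun i => ?_) ?_ <;> simp

lemma colElt_add (v w : Fin n → F) :
    colElt F1 F2 (v + w) = colElt F1 F2 v + colElt F1 F2 w := by
  refine AGL_ext (fun i j => ?_) (fun i => ?_) ?_ <;> simp

lemma colElt_neg (v : Fin n → F) : colElt F1 F2 (-v) = -colElt F1 F2 v := by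
  refine AGL_ext (fun i j => ?_) (fun i => ?_) ?_ <;> simp

lemma colElt_injective : Function.Injective (colElt (n := n) F1 F2) := by
  intro v w h
  funext i
  rw [← colElt_castSucc_last (F1 := F1) (F2 := F2) v i, h, colElt_castSucc_last]

/-- The ideal of matrices concentrated in the top-right column. -/
def colIdeal (n : ℕ) (F1 F2 : Subfield F) : TwoSidedIdeal (AGL n F1 F2) :=
  TwoSidedIdeal.mk' (Set.range (colElt F1 F2))
    ⟨0, colElt_zero⟩
    (by rintro _ _ ⟨v, rfl⟩ ⟨w, rfl⟩; exact ⟨v + w, colElt_add v w⟩)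
    (by rintro _ ⟨v, rfl⟩; exact ⟨-v, colElt_neg v⟩)
    (by rintro x _ ⟨v, rfl⟩; exact ⟨_, (mul_colElt x v).symm⟩)
    (by rintro _ x ⟨v, rfl⟩; exact ⟨_, (colElt_mul x v).symm⟩)

lemma mem_colIdeal {x : AGL n F1 F2} : x ∈ colIdeal n F1 F2 ↔ ∃ w, colElt F1 F2 w = x := by
  change x - 0 ∈ Set.range (colElt F1 F2) ↔ _
  rw [sub_zero, Set.mem_range]

lemma card_colIdeal [Fintype F] : Nat.card (colIdeal n F1 F2) = Nat.card F ^ n := by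
  have h : Nat.card (Fin n → F) = Nat.card (colIdeal n F1 F2) := by
    refine Nat.card_congr (Equiv.ofBijective
      (fun w => (⟨colElt F1 F2 w, mem_colIdeal.2 ⟨w, rfl⟩⟩ : colIdeal n F1 F2)) ⟨?_, ?_⟩)
    · intro v w hvw
      exact colElt_injective (congrArg Subtype.val hvw)
    · rintro ⟨x, hx⟩
      obtain ⟨w, rfl⟩ := mem_colIdeal.1 hx
      exact ⟨w, rfl⟩
  rw [← h, Nat.card_fun, Nat.card_eq_fintype_card (α := Fin n), Fintype.card_fin]

/-- The columns occurring in a two-sided ideal are stable under scaling by all of `F`: the scalars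
preserving them form a subfield, which contains `F1` (acting on the left) and `F2` (acting on the
right). -/
lemma colElt_smul_mem [Fintype F] (hcomp : F1 ⊔ F2 = ⊤) (K : TwoSidedIdeal (AGL n F1 F2))
    (c : F) {w : Fin n → F} (hw : colElt F1 F2 w ∈ K) :
    colElt F1 F2 (fun i => c * w i) ∈ K := by
  have hpow : ∀ c : F, (∀ w, colElt F1 F2 w ∈ K → colElt F1 F2 (fun i => c * w i) ∈ K) →
      ∀ (m : ℕ) w, colElt F1 F2 w ∈ K → colElt F1 F2 (fun i => c ^ m * w i) ∈ K := by
    intro c hc m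
    induction m with
    | zero => intro w hw; simpa using hw
    | succ m ih =>
      intro w hw
      have := hc _ (ih w hw)
      simpa only [← mul_assoc, ← pow_succ'] using this
  let S : Subfield F :=
    { carrier := {c | ∀ w, colElt F1 F2 w ∈ K → colElt F1 F2 (fun i => c * w i) ∈ K}
      one_mem' := fun w hw => by simpa using hw
      zero_mem' := fun w _ => by
        have : (fun i => (0 : F) * w i) = 0 := by funext i; simp
        rw [this, colElt_zero]
        exact K.zero_mem
      add_mem' := fun {a b} ha hb w hw => by
        have := K.add_mem (ha w hw) (hb w hw)
        rw [← colElt_add] at this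
        convert this using 2
        funext i
        simp [add_mul]
      neg_mem' := fun {a} ha w hw => by
        have := K.neg_mem (ha w hw)
        rw [← colElt_neg] at this
        convert this using 2
        funext i
        simp
      mul_mem' := fun {a b} ha hb w hw => by
        simpa only [mul_assoc] using ha _ (hb w hw)
      inv_mem' := fun a ha w hw => by
        by_cases h0 : a = 0
        · subst h0
          simpa using ha w hw
        · -- `a⁻¹` is the power `a ^ (|F| - 2)`
          have h2 : a⁻¹ = a ^ (Fintype.card F - 2) := by
            refine inv_eq_of_mul_eq_one_right ?_
            rw [← pow_succ', ← FiniteField.pow_card_sub_one_eq_one a h0]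
            congr 1
            have := Fintype.one_lt_card (α := F)
            omega
          rw [h2]
          exact hpow a ha _ w hw }
  have hS : F1 ⊔ F2 ≤ S := by
    refine sup_le (fun a ha w hw => ?_) (fun b hb w hw => ?_)
    · have := K.mul_mem_left (diagElt (F1 := F1) (F2 := F2) (Matrix.diagonal fun _ => a) 0
        (fun i j => by
          rw [Matrix.diagonal_apply]; split
          · exact ha
          · exact zero_mem _) (zero_mem _)) _ hw
      rw [mul_colElt] at this
      simpa [diagElt, Matrix.diagonal_apply] using this
    · have := K.mul_mem_right _ (diagElt (F1 := F1) (F2 := F2) 0 b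
        (fun i j => zero_mem _) hb) hw
      rw [colElt_mul] at this
      simpa [diagElt] using this
  rw [hcomp] at hS
  exact hS (Subfield.mem_top c) w hw

lemma isAtom_colIdeal [Fintype F] (hn : 1 ≤ n) (hcomp : F1 ⊔ F2 = ⊤) :
    IsAtom (colIdeal n F1 F2) := by
  constructor
  · intro h
    have h1 : colElt F1 F2 (1 : Fin n → F) ∈ colIdeal n F1 F2 := mem_colIdeal.2 ⟨1, rfl⟩
    rw [h, TwoSidedIdeal.mem_bot, ← colElt_zero] at h1
    exact one_ne_zero (congrFun (colElt_injective h1) ⟨0, hn⟩)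
  · intro K hK
    by_contra hbot
    obtain ⟨x, hx, hx0⟩ : ∃ x ∈ K, x ≠ 0 := by
      by_contra! h
      exact hbot (le_bot_iff.1 fun x hx => by simp [h x hx])
    obtain ⟨w, rfl⟩ := mem_colIdeal.1 (hK.le hx)
    obtain ⟨k, hk⟩ : ∃ k, w k ≠ 0 := by
      by_contra! h
      exact hx0 (by rw [show w = 0 from funext h, colElt_zero])
    refine hK.not_ge fun y hy => ?_
    obtain ⟨v, rfl⟩ := mem_colIdeal.1 hy
    -- multiplying by the matrix unit `E_{ik}` moves the entry `w k` to position `i`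
    have hsingle : ∀ i, colElt F1 F2 (Pi.single i (v i)) ∈ K := by
      intro i
      have h1 := K.mul_mem_left (diagElt (F1 := F1) (F2 := F2) (Matrix.single i k 1) 0
        (fun a b => by
          rw [Matrix.single_apply]; split
          · exact one_mem _
          · exact zero_mem _) (zero_mem _)) _ hx
      rw [mul_colElt] at h1
      have h2 := colElt_smul_mem hcomp K (v i * (w k)⁻¹) h1
      convert h2 using 2
      funext a
      by_cases ha : a = i
      · subst ha
        simp [diagElt, Matrix.single_apply, hk]
      · simp [diagElt, Matrix.single_apply, ha, Ne.symm ha]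
    have hsum : ∀ s : Finset (Fin n), colElt F1 F2 (∑ i ∈ s, Pi.single i (v i)) ∈ K := by
      intro s
      induction s using Finset.induction_on with
      | empty => rw [Finset.sum_empty, colElt_zero]; exact K.zero_mem
      | insert a s ha ih =>
        rw [Finset.sum_insert ha, colElt_add]
        exact K.add_mem (hsingle a) ih
    have := hsum Finset.univ
    rwa [Finset.univ_sum_single] at this

lemma colIdeal_sq_zero (x : AGL n F1 F2) (hx : x ∈ colIdeal n F1 F2) (y : AGL n F1 F2)
    (hy : y ∈ colIdeal n F1 F2) : x * y = 0 := by
  obtain ⟨v, rfl⟩ := mem_colIdeal.1 hx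
  obtain ⟨w, rfl⟩ := mem_colIdeal.1 hy
  rw [mul_colElt, ← colElt_zero]
  congr 1
  funext i
  simp

/-! ### The cover indexed by projective space -/

/-- The subring of those `r` for which `y` is an eigenvector (or zero) with eigenvalue the
bottom-right entry of `r`. -/
def eigSubring (F1 F2 : Subfield F) (y : Fin (n + 1) → F) : NonUnitalSubring (AGL n F1 F2) where
  carrier := {r | r.1 *ᵥ y = r.1 (Fin.last n) (Fin.last n) • y}
  zero_mem' := by simp
  add_mem' := by
    intro a b ha hb
    simp only [Set.mem_ofPred_eq] at ha hb ⊢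
    simp [Matrix.add_mulVec, ha, hb, add_smul]
  neg_mem' := by
    intro a ha
    simp only [Set.mem_ofPred_eq] at ha ⊢
    simp [Matrix.neg_mulVec, ha]
  mul_mem' := by
    intro a b ha hb
    simp only [Set.mem_ofPred_eq] at ha hb ⊢
    have h : (a * b).1 (Fin.last n) (Fin.last n) =
        a.1 (Fin.last n) (Fin.last n) * b.1 (Fin.last n) (Fin.last n) := by
      simp [Matrix.mul_apply, Fin.sum_univ_castSucc, a.2.2.1]
    rw [h, Subring.coe_mul, ← Matrix.mulVec_mulVec, hb, Matrix.mulVec_smul, ha, smul_smul,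
      mul_comm]

lemma mem_eigSubring {y : Fin (n + 1) → F} {r : AGL n F1 F2} :
    r ∈ eigSubring F1 F2 y ↔ r.1 *ᵥ y = r.1 (Fin.last n) (Fin.last n) • y := Iff.rfl

lemma eigSubring_smul {c : F} (hc : c ≠ 0) (y : Fin (n + 1) → F) :
    eigSubring F1 F2 (c • y) = eigSubring F1 F2 y := by
  ext r
  rw [mem_eigSubring, mem_eigSubring, Matrix.mulVec_smul, smul_comm,
    (smul_right_injective _ hc).eq_iff]

lemma eigSubring_ne_top (hn : 1 ≤ n) {y : Fin (n + 1) → F} (hy : y ≠ 0) :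
    eigSubring F1 F2 y ≠ ⊤ := by
  intro h
  have hall : ∀ r : AGL n F1 F2, r.1 *ᵥ y = r.1 (Fin.last n) (Fin.last n) • y := fun r =>
    mem_eigSubring.1 (h ▸ NonUnitalSubring.mem_top r)
  -- the column elements force the last coordinate to vanish, `diag(0, 1)` the other ones
  have hlast : y (Fin.last n) = 0 := by
    have := congrFun (hall (colElt F1 F2 1)) (Fin.castSucc ⟨0, hn⟩)
    simpa only [Matrix.mulVec, dotProduct, Fin.sum_univ_castSucc, colElt_castSucc,
      colElt_castSucc_last, colElt_last_last, zero_mul, Finset.sum_const_zero, zero_add,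
      Pi.one_apply, one_mul, zero_smul, Pi.zero_apply] using this
  refine hy (funext fun i => ?_)
  induction i using Fin.lastCases with
  | last => exact hlast
  | cast i =>
    have := congrFun (hall (diagElt (F1 := F1) (F2 := F2) 0 1 (fun i j => zero_mem _)
      (one_mem _))) i.castSucc
    simpa [diagElt, Matrix.mulVec, dotProduct, Fin.sum_univ_castSucc] using this.symm

lemma exists_mem_eigSubring (r : AGL n F1 F2) :
    ∃ y : Fin (n + 1) → F, y ≠ 0 ∧ r ∈ eigSubring F1 F2 y := by
  have hdet : (r.1 - r.1 (Fin.last n) (Fin.last n) • (1 : Matrix _ _ F)).det = 0 := by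
    refine Matrix.det_eq_zero_of_row_eq_zero (Fin.last n) fun j => ?_
    induction j using Fin.lastCases with
    | last => simp
    | cast j => simp [r.2.2.1 j, (Fin.castSucc_ne_last j).symm]
  obtain ⟨y, hy, h⟩ := Matrix.exists_mulVec_eq_zero_iff.2 hdet
  refine ⟨y, hy, mem_eigSubring.2 ?_⟩
  rwa [Matrix.sub_mulVec, Matrix.smul_mulVec, Matrix.one_mulVec, sub_eq_zero] at h

lemma coveringNumber_AGL_le [Fintype F] (hn : 1 ≤ n) :
    coveringNumber (AGL n F1 F2) ≤
      (((Nat.card F ^ (n + 1) - 1) / (Nat.card F - 1) : ℕ) : ℕ∞) := by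
  let P := Projectivization F (Fin (n + 1) → F)
  have : Fintype P := Fintype.ofFinite P
  let C : Finset (NonUnitalSubring (AGL n F1 F2)) :=
    Finset.univ.image fun l : P => eigSubring F1 F2 l.rep
  have hC : IsRingCover (AGL n F1 F2) C := by
    refine ⟨fun S hS => ?_, fun r => ?_⟩
    · obtain ⟨l, -, rfl⟩ := Finset.mem_image.1 hS
      exact eigSubring_ne_top hn l.rep_nonzero
    · obtain ⟨y, hy, hr⟩ := exists_mem_eigSubring r
      refine ⟨_, Finset.mem_image_of_mem _ (Finset.mem_univ (Projectivization.mk F y hy)), ?_⟩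
      obtain ⟨a, ha⟩ := Projectivization.exists_smul_eq_mk_rep F y hy
      rw [← ha, Units.smul_def, eigSubring_smul a.ne_zero]
      exact hr
  refine (coveringNumber_le_card hC).trans ?_
  have hcard : Nat.card P = (Nat.card F ^ (n + 1) - 1) / (Nat.card F - 1) := by
    rw [Projectivization.card'', Nat.card_fun, Nat.card_eq_fintype_card (α := Fin (n + 1)),
      Fintype.card_fin]
  rw [← hcard, Nat.card_eq_fintype_card]
  exact_mod_cast Finset.card_image_le

end Column

/-- Proposition 3.3(4): if `R = A(n,q1,q2)` is σ-elementary then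
`q^n + 1 ≤ σ(R) ≤ (q^{n+1} − 1)/(q − 1)`. -/
theorem AGL_coveringNumber_bounds_of_sigmaElementary
    (p d1 d2 n : ℕ) (hp : p.Prime) (hd1 : 1 ≤ d1) (hd2 : 1 ≤ d2) (hn : 1 ≤ n)
    (F : Type) [Field F] [Fintype F] (F1 F2 : Subfield F)
    (hF1 : Nat.card F1 = p ^ d1) (hF2 : Nat.card F2 = p ^ d2)
    (hF : Nat.card F = p ^ Nat.lcm d1 d2) (hcomp : F1 ⊔ F2 = ⊤)
    (hσ : IsSigmaElementary ↥(AGL n F1 F2)) :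
    (((p ^ Nat.lcm d1 d2) ^ n + 1 : ℕ) : ℕ∞) ≤ coveringNumber ↥(AGL n F1 F2) ∧
    coveringNumber ↥(AGL n F1 F2) ≤
      ((((p ^ Nat.lcm d1 d2) ^ (n + 1) - 1) / (p ^ Nat.lcm d1 d2 - 1) : ℕ) : ℕ∞) := by
  rw [← hF]
  refine ⟨?_, coveringNumber_AGL_le hn⟩
  have hatom := isAtom_colIdeal hn hcomp
  rw [← card_colIdeal (F1 := F1) (F2 := F2)]
  exact card_add_one_le_coveringNumber _ hatom colIdeal_sq_zero (hσ _ hatom.1)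
end
end
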